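/- Let α > 0, let n ∈ ℤ, and denote I_n = [(n−1)π/α, (nπ+1)/α]. Let q : ℝ → ℝ be differentiable on I_n with |q(k)| < 1, |arcsin(q(k))| < 1/2, and |q'(k)/√(1 − q(k)²)| < α/2 for all k ∈ I_n. Define h_n(k) = kα − (−1)ⁿ·arcsin(q(k)) − nπ. Then h_n has exactly one zero in I_n: there exists a unique k ∈ I_n with h_n(k) = 0. -/

import Mathlib

open Real

/-!
Since `|arcsin (q k)| < 1/2`, the function `h` is negative at the left endpoint and positive at the
right one, so it vanishes in between. In the interior,
`h' = α - (-1)ⁿ q' / √(1 - q²) > α - α/2 > 0`, so `h` is strictly increasing on the interval and the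
zero is unique. Only the derivative at interior points matters, which is where differentiability on
the closed interval makes `deriv q` the genuine derivative.
-/

/-- The central existence-and-uniqueness lemma in the proof of Theorem 3.2:
the function `h_n(k) = kα - (-1)ⁿ arcsin(q(k)) - nπ` has exactly one zero in
the interval `I_n = [(n-1)π/α, (nπ+1)/α]`. -/
theorem unique_zero_of_hn
    (α : ℝ) (hα : 0 < α) (n : ℤ)
    (q : ℝ → ℝ)
    (hq_diff : DifferentiableOn ℝ q (Set.Icc (((n : ℝ) - 1) * π / α) (((n : ℝ) * π + 1) / α)))
    (hq_lt : ∀ k ∈ Set.Icc (((n : ℝ) - 1) * π / α) (((n : ℝ) * π + 1) / α), |q k| < 1)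
    (harcsin : ∀ k ∈ Set.Icc (((n : ℝ) - 1) * π / α) (((n : ℝ) * π + 1) / α),
      |Real.arcsin (q k)| < 1 / 2)
    (hq' : ∀ k ∈ Set.Icc (((n : ℝ) - 1) * π / α) (((n : ℝ) * π + 1) / α),
      |deriv q k / Real.sqrt (1 - (q k) ^ 2)| < α / 2)
    (h : ℝ → ℝ)
    (hh : ∀ k, h k = k * α - (-1 : ℝ) ^ n * Real.arcsin (q k) - (n : ℝ) * π) :
    ∃! k : ℝ, k ∈ Set.Icc (((n : ℝ) - 1) * π / α) (((n : ℝ) * π + 1) / α) ∧ h k = 0 := by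
  set a := ((n : ℝ) - 1) * π / α with ha
  set b := ((n : ℝ) * π + 1) / α with hb
  have haα : a * α = ((n : ℝ) - 1) * π := by rw [ha]; field_simp
  have hbα : b * α = (n : ℝ) * π + 1 := by rw [hb]; field_simp
  have hπ := Real.pi_gt_three
  have hab : a ≤ b := by
    apply le_of_mul_le_mul_right _ hα
    rw [haα, hbα]
    linarith
  have hsign : |(-1 : ℝ) ^ n| = 1 := by rw [abs_zpow]; simp
  have hh_eq : h = fun k => k * α - (-1 : ℝ) ^ n * Real.arcsin (q k) - (n : ℝ) * π := funext hh
  have hcont : ContinuousOn h (Set.Icc a b) := by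
    have hq := hq_diff.continuousOn
    rw [hh_eq]
    exact ((continuousOn_id.mul continuousOn_const).sub
      (continuousOn_const.mul (Real.continuous_arcsin.comp_continuousOn hq))).sub continuousOn_const
  have hmono : StrictMonoOn h (Set.Icc a b) := by
    refine strictMonoOn_of_deriv_pos (convex_Icc a b) hcont fun k hk => ?_
    have hkI := interior_subset hk
    have hqk : HasDerivAt q (deriv q k) k :=
      (hq_diff.differentiableAt (mem_interior_iff_mem_nhds.mp hk)).hasDerivAt
    obtain ⟨h1, h2⟩ := abs_lt.mp (hq_lt k hkI)
    have harc := (Real.hasDerivAt_arcsin h1.ne' h2.ne).comp k hqk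
    have hder := (((hasDerivAt_id k).mul_const α).sub
      (harc.const_mul ((-1 : ℝ) ^ n))).sub_const ((n : ℝ) * π)
    have hder' : HasDerivAt h
        (α - (-1 : ℝ) ^ n * (deriv q k / Real.sqrt (1 - (q k) ^ 2))) k := by
      rw [hh_eq]
      refine hder.congr_deriv ?_
      ring
    rw [hder'.deriv]
    have hle := le_abs_self ((-1 : ℝ) ^ n * (deriv q k / Real.sqrt (1 - (q k) ^ 2)))
    rw [abs_mul, hsign, one_mul] at hle
    linarith [hq' k hkI]
  have hbound : ∀ k ∈ Set.Icc a b, |(-1 : ℝ) ^ n * Real.arcsin (q k)| < 1 / 2 := by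
    intro k hk
    rw [abs_mul, hsign, one_mul]
    exact harcsin k hk
  have hneg : h a ≤ 0 := by
    rw [hh, haα]
    linarith [(abs_lt.mp (hbound a (Set.left_mem_Icc.mpr hab))).1]
  have hpos : 0 ≤ h b := by
    rw [hh, hbα]
    linarith [(abs_lt.mp (hbound b (Set.right_mem_Icc.mpr hab))).2]
  obtain ⟨k, hk, hk0⟩ := intermediate_value_Icc hab hcont ⟨hneg, hpos⟩
  exact ⟨k, ⟨hk, hk0⟩, fun y hy => hmono.injOn hy.1 hk (hy.2.trans hk0.symm)⟩
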